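/- Suppose g is non-decreasing. Let T>0, let x ∈ H, and let y be the bounding sequence for x. Suppose X is a weak solution of the dyadic model with initial condition x that satisfies the energy inequality on [0,t] for every t<T. Then X_n(t)² ≤ y_n for all t ∈ [0,T) and all n≥1. -/

import Mathlib

open scoped BigOperators ENNReal
open MeasureTheory Filter Set Topology

/-- `kₙ = 2^{βn}`. -/
noncomputable def kk (β : ℝ) (n : ℕ) : ℝ := (2 : ℝ) ^ (β * n)

/-- A weak solution of the dyadic model: `X 0 ≡ 0`, `X n 0 = x n`, and the ODE holds
for every `n ≥ 1` and `t ≥ 0` (the derivative being taken within `[0,∞)`). -/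
def IsDyadicSolution (β : ℝ) (φ g : ℕ → ℝ) (x : ℕ → ℝ) (X : ℕ → ℝ → ℝ) : Prop :=
  (∀ t : ℝ, X 0 t = 0) ∧
  (∀ n : ℕ, 1 ≤ n → X n 0 = x n) ∧
  (∀ n : ℕ, 1 ≤ n → ∀ t : ℝ, 0 ≤ t →
    HasDerivWithinAt (X n)
      (φ (n - 1) * kk β (n - 1) * (X (n - 1) t) ^ 2
        - φ n * kk β n * X n t * X (n + 1) t
        - kk β n / g n * X n t) (Set.Ici 0) t)

/-- The energy inequality at time `t`:
`∑_{n≥1} Xₙ(t)² + ∫_0^t ∑_{n≥1} (2kₙ/gₙ) Xₙ(s)² ds ≤ ∑_{n≥1} xₙ²`. -/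
def EnergyIneqAt (β : ℝ) (g x : ℕ → ℝ) (X : ℕ → ℝ → ℝ) (t : ℝ) : Prop :=
  (∑' n : ℕ, ENNReal.ofReal ((X (n + 1) t) ^ 2))
      + (∫⁻ s in Set.Ioc (0 : ℝ) t,
          ∑' n : ℕ, ENNReal.ofReal (2 * kk β (n + 1) / g (n + 1) * (X (n + 1) s) ^ 2))
    ≤ ∑' n : ℕ, ENNReal.ofReal ((x (n + 1)) ^ 2)

/-- `‖φ‖_{ℓ^∞} = sup_{n≥1} |φₙ|`. -/
noncomputable def phiNorm (φ : ℕ → ℝ) : ℝ := ⨆ n : ℕ, |φ (n + 1)|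

/-- For `gₙ, Φ, v > 0` this is exactly `Cₙ(v) = (1 + 1/((1/2) gₙ Φ v))⁻¹`. -/
noncomputable def Cfun (Φ : ℝ) (g : ℕ → ℝ) (n : ℕ) (v : ℝ) : ℝ :=
  (g n * Φ * v / 2) / (1 + g n * Φ * v / 2)

/-- `∑_{i ≥ n} xᵢ²`. -/
noncomputable def tail2 (x : ℕ → ℝ) (n : ℕ) : ℝ := ∑' i : ℕ, (x (n + i)) ^ 2

/-- The bounding sequence for `x`: `y₁ = y₂ = 2‖x‖_H²` and
`y_{n+2} = C_{n+2}(√y_{n+1}) yₙ + ∑_{i ≥ n+2} xᵢ²`. -/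
noncomputable def boundSeq (Φ : ℝ) (g x : ℕ → ℝ) : ℕ → ℝ
  | 0 => 0
  | 1 => 2 * tail2 x 1
  | 2 => 2 * tail2 x 1
  | n + 3 =>
      Cfun Φ g (n + 3) (Real.sqrt (boundSeq Φ g x (n + 2))) * boundSeq Φ g x (n + 1)
        + tail2 x (n + 3)

/-!
Multiplying the equation for `X n` by `2 * X n` and integrating gives a balance for each mode: its
energy plus its dissipation changes only through the fluxes from mode `n - 1` and to mode `n + 1`.
Subtracting the balances of the first `n` modes from the energy inequality bounds the energy budget
`Eₙ₊₁` of all modes beyond `n` by their initial energy plus the flux `Fₙ` out of mode `n`.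

As soon as `kₙ gₙ` is non-decreasing in `n`, Young's inequality bounds `Fₙ` by `b = gₙ₊₁ Φ v / 2`
times the dissipation in the modes `n` and `n + 1`, where `v` bounds `|Xₙ|`. That dissipation is
part of `Eₙ` but not of `a = Xₙ₊₁² + Eₙ₊₂`, so `a ≤ ∑_{i ≥ n+1} xᵢ² + b (y - a)` whenever
`Xₙ₋₁² + Eₙ ≤ y`. Solving for `a` produces the factor `b / (1 + b) = Cₙ₊₁(v)` and a two-step
induction on the stronger bound `Xₙ² + Eₙ₊₁ ≤ yₙ`.
-/

lemma tsum_add_left_eq_add_tsum {α : Type*} [AddCommGroup α] [TopologicalSpace α]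
    [IsTopologicalAddGroup α] [T2Space α] {f : ℕ → α} (hf : Summable f) (n : ℕ) :
    ∑' i, f (n + i) = f n + ∑' i, f (n + 1 + i) := by
  have hfn : Summable fun i => f (n + i) := by
    simpa only [add_comm n] using (summable_nat_add_iff n).2 hf
  simpa only [add_zero, add_assoc, add_comm 1] using hfn.tsum_eq_zero_add

lemma summable_of_tsum_ofReal_ne_top {ι : Type*} {a : ι → ℝ} (ha : ∀ i, 0 ≤ a i)
    (h : ∑' i, ENNReal.ofReal (a i) ≠ ∞) : Summable a := by
  simpa only [ENNReal.toReal_ofReal (ha _)] using ENNReal.summable_toReal h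

lemma tsum_le_tsum_of_tsum_ofReal_le {ι κ : Type*} {a : ι → ℝ} {b : κ → ℝ} (ha : ∀ i, 0 ≤ a i)
    (hb : ∀ i, 0 ≤ b i) (hbs : Summable b)
    (h : ∑' i, ENNReal.ofReal (a i) ≤ ∑' i, ENNReal.ofReal (b i)) : ∑' i, a i ≤ ∑' i, b i := by
  have has : Summable a := summable_of_tsum_ofReal_ne_top ha (ne_top_of_le_ne_top
    hbs.tsum_ofReal_ne_top h)
  rwa [← ENNReal.ofReal_tsum_of_nonneg ha has, ← ENNReal.ofReal_tsum_of_nonneg hb hbs,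
    ENNReal.ofReal_le_ofReal_iff (tsum_nonneg hb)] at h

lemma le_div_one_add_mul_add {a b c y : ℝ} (hb : 0 ≤ b) (hc : 0 ≤ c) (h : a ≤ c + b * (y - a)) :
    a ≤ b / (1 + b) * y + c := by
  have hsolved : a ≤ (b * y + c) / (1 + b) := (le_div_iff₀ (by positivity)).2 (by linarith)
  calc a ≤ (b * y + c) / (1 + b) := hsolved
    _ = b / (1 + b) * y + c / (1 + b) := by ring
    _ ≤ b / (1 + b) * y + c := by gcongr; exact div_le_self hc (by linarith)

lemma two_mul_mul_le_of_mul_le_mul {k k' γ γ' : ℝ} (hk : 0 ≤ k) (hγ : 0 < γ) (hγ' : 0 < γ')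
    (hkγ : k * γ ≤ k' * γ') (u w : ℝ) :
    2 * k * (u * w) ≤ γ' * (k / γ * u ^ 2 + k' / γ' * w ^ 2) :=
  calc 2 * k * (u * w) = k * (2 * u * w) := by ring
    _ ≤ k * (γ' / γ * u ^ 2 + (γ' / γ)⁻¹ * w ^ 2) := by
      gcongr; exact two_mul_le_add_mul_sq (div_pos hγ' hγ)
    _ = γ' * (k / γ * u ^ 2) + k * γ / γ' * w ^ 2 := by field_simp
    _ ≤ γ' * (k / γ * u ^ 2) + k' * γ' / γ' * w ^ 2 := by gcongr
    _ = γ' * (k / γ * u ^ 2 + k' / γ' * w ^ 2) := by field_simp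

lemma kk_pos (β : ℝ) (n : ℕ) : 0 < kk β n := Real.rpow_pos_of_pos two_pos _

lemma kk_monotone {β : ℝ} (hβ : 0 ≤ β) : Monotone (kk β) := fun m n hmn =>
  Real.rpow_le_rpow_of_exponent_le one_le_two (by gcongr)

lemma abs_le_phiNorm {φ : ℕ → ℝ} (hφ : BddAbove (range fun n => |φ (n + 1)|)) {n : ℕ}
    (hn : 1 ≤ n) : |φ n| ≤ phiNorm φ := by
  obtain ⟨m, rfl⟩ := Nat.exists_eq_add_of_le' hn
  exact le_ciSup hφ m

lemma tail2_nonneg (x : ℕ → ℝ) (n : ℕ) : 0 ≤ tail2 x n := tsum_nonneg fun _ => sq_nonneg _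

lemma tail2_eq_sq_add_tail2 {x : ℕ → ℝ} (hx : Summable fun n => x (n + 1) ^ 2) (n : ℕ) :
    tail2 x n = x n ^ 2 + tail2 x (n + 1) :=
  tsum_add_left_eq_add_tsum (f := fun n => x n ^ 2) ((summable_nat_add_iff 1).1 hx) n

/-- The rate `(2kₙ/gₙ) Xₙ(s)²` at which mode `n` dissipates energy. -/
noncomputable def dissipationRate (β : ℝ) (g : ℕ → ℝ) (X : ℕ → ℝ → ℝ) (n : ℕ) (s : ℝ) : ℝ :=
  2 * kk β n / g n * X n s ^ 2

/-- The rate `2 φₙ kₙ Xₙ(s)² Xₙ₊₁(s)` at which energy passes from mode `n` to mode `n + 1`. -/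
noncomputable def fluxRate (β : ℝ) (φ : ℕ → ℝ) (X : ℕ → ℝ → ℝ) (n : ℕ) (s : ℝ) : ℝ :=
  2 * φ n * kk β n * X n s ^ 2 * X (n + 1) s

/-- The energy dissipated by mode `n` during `[0, t]`. -/
noncomputable def dissipation (β : ℝ) (g : ℕ → ℝ) (X : ℕ → ℝ → ℝ) (n : ℕ) (t : ℝ) : ℝ :=
  ∫ s in (0 : ℝ)..t, dissipationRate β g X n s

/-- The energy passed from mode `n` to mode `n + 1` during `[0, t]`. -/
noncomputable def energyFlux (β : ℝ) (φ : ℕ → ℝ) (X : ℕ → ℝ → ℝ) (n : ℕ) (t : ℝ) : ℝ :=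
  ∫ s in (0 : ℝ)..t, fluxRate β φ X n s

/-- The energy budget of mode `n` at time `t`: the energy present plus the energy dissipated. -/
noncomputable def modeBudget (β : ℝ) (g : ℕ → ℝ) (X : ℕ → ℝ → ℝ) (n : ℕ) (t : ℝ) : ℝ :=
  X n t ^ 2 + dissipation β g X n t

/-- The energy budget `∑_{i ≥ n} (Xᵢ(t)² + ∫_0^t (2kᵢ/gᵢ) Xᵢ²)` of the modes from `n` on; it is
`0` when the series diverges, which the energy inequality excludes. -/
noncomputable def tailBudget (β : ℝ) (g : ℕ → ℝ) (X : ℕ → ℝ → ℝ) (n : ℕ) (t : ℝ) : ℝ :=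
  ∑' i, modeBudget β g X (n + i) t

section

variable {β t : ℝ} {φ g x : ℕ → ℝ} {X : ℕ → ℝ → ℝ} {n : ℕ}

lemma dissipationRate_nonneg (hg : 0 ≤ g n) (s : ℝ) : 0 ≤ dissipationRate β g X n s := by
  have := kk_pos β n
  unfold dissipationRate
  positivity

lemma dissipation_nonneg (hg : 0 ≤ g n) (ht : 0 ≤ t) : 0 ≤ dissipation β g X n t :=
  intervalIntegral.integral_nonneg ht fun s _ => dissipationRate_nonneg hg s

lemma sq_le_modeBudget (hg : 0 ≤ g n) (ht : 0 ≤ t) : X n t ^ 2 ≤ modeBudget β g X n t :=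
  le_add_of_nonneg_right (dissipation_nonneg hg ht)

lemma modeBudget_nonneg (hg : 0 ≤ g n) (ht : 0 ≤ t) : 0 ≤ modeBudget β g X n t :=
  (sq_nonneg _).trans (sq_le_modeBudget hg ht)

lemma tailBudget_nonneg (hg : ∀ i, n ≤ i → 0 ≤ g i) (ht : 0 ≤ t) : 0 ≤ tailBudget β g X n t :=
  tsum_nonneg fun i => modeBudget_nonneg (hg (n + i) (Nat.le_add_right n i)) ht

lemma tailBudget_eq_modeBudget_add (hsum : Summable fun n => modeBudget β g X n t) (n : ℕ) :
    tailBudget β g X n t = modeBudget β g X n t + tailBudget β g X (n + 1) t :=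
  tsum_add_left_eq_add_tsum hsum n

lemma sq_add_tailBudget_le (hsum : Summable fun n => modeBudget β g X n t) (hg : 0 ≤ g n)
    (ht : 0 ≤ t) : X n t ^ 2 + tailBudget β g X (n + 1) t ≤ tailBudget β g X n t := by
  rw [tailBudget_eq_modeBudget_add hsum n]
  gcongr
  exact sq_le_modeBudget hg ht

lemma intervalIntegrable_dissipationRate (hX : ContinuousOn (X n) (Icc 0 t)) (ht : 0 ≤ t) :
    IntervalIntegrable (dissipationRate β g X n) volume 0 t := by
  rw [← uIcc_of_le ht] at hX
  unfold dissipationRate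
  exact ContinuousOn.intervalIntegrable (by fun_prop)

lemma intervalIntegrable_fluxRate (hX : ContinuousOn (X n) (Icc 0 t))
    (hX' : ContinuousOn (X (n + 1)) (Icc 0 t)) (ht : 0 ≤ t) :
    IntervalIntegrable (fluxRate β φ X n) volume 0 t := by
  rw [← uIcc_of_le ht] at hX hX'
  unfold fluxRate
  exact ContinuousOn.intervalIntegrable (by fun_prop)

lemma ofReal_dissipation (hX : ContinuousOn (X n) (Icc 0 t)) (hg : 0 ≤ g n) (ht : 0 ≤ t) :
    ENNReal.ofReal (dissipation β g X n t) =
      ∫⁻ s in Ioc 0 t, ENNReal.ofReal (dissipationRate β g X n s) := by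
  rw [dissipation, intervalIntegral.integral_of_le ht]
  exact ofReal_integral_eq_lintegral_ofReal (intervalIntegrable_dissipationRate hX ht).1
    (Eventually.of_forall (dissipationRate_nonneg hg))

namespace EnergyIneqAt

lemma tsum_ofReal_modeBudget_le (hE : EnergyIneqAt β g x X t)
    (hX : ∀ n, ContinuousOn (X n) (Icc 0 t)) (hg : ∀ n, 1 ≤ n → 0 ≤ g n) (ht : 0 ≤ t) :
    ∑' n, ENNReal.ofReal (modeBudget β g X (n + 1) t) ≤ ∑' n, ENNReal.ofReal (x (n + 1) ^ 2) := by
  have hmeas (n : ℕ) : AEMeasurable (fun s => ENNReal.ofReal (dissipationRate β g X (n + 1) s))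
      (volume.restrict (Ioc 0 t)) :=
    (intervalIntegrable_dissipationRate (hX (n + 1)) ht).1.aemeasurable.ennreal_ofReal
  have hmode (n : ℕ) : ENNReal.ofReal (modeBudget β g X (n + 1) t) =
      ENNReal.ofReal (X (n + 1) t ^ 2) +
        ∫⁻ s in Ioc 0 t, ENNReal.ofReal (dissipationRate β g X (n + 1) s) := by
    have hgn := hg (n + 1) n.succ_pos
    rw [modeBudget, ENNReal.ofReal_add (sq_nonneg _) (dissipation_nonneg hgn ht),
      ofReal_dissipation (hX (n + 1)) hgn ht]
  simp_rw [hmode]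
  rw [ENNReal.tsum_add, ← lintegral_tsum hmeas]
  exact hE

lemma summable_modeBudget (hE : EnergyIneqAt β g x X t)
    (hX : ∀ n, ContinuousOn (X n) (Icc 0 t)) (hg : ∀ n, 1 ≤ n → 0 ≤ g n)
    (hx : Summable fun n => x (n + 1) ^ 2) (ht : 0 ≤ t) :
    Summable fun n => modeBudget β g X n t :=
  (summable_nat_add_iff 1).1 <|
    summable_of_tsum_ofReal_ne_top (fun n => modeBudget_nonneg (hg (n + 1) n.succ_pos) ht) <|
      ne_top_of_le_ne_top hx.tsum_ofReal_ne_top (hE.tsum_ofReal_modeBudget_le hX hg ht)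

lemma tailBudget_one_le (hE : EnergyIneqAt β g x X t)
    (hX : ∀ n, ContinuousOn (X n) (Icc 0 t)) (hg : ∀ n, 1 ≤ n → 0 ≤ g n)
    (hx : Summable fun n => x (n + 1) ^ 2) (ht : 0 ≤ t) :
    tailBudget β g X 1 t ≤ tail2 x 1 := by
  simp only [tailBudget, tail2, add_comm 1]
  exact tsum_le_tsum_of_tsum_ofReal_le (fun n => modeBudget_nonneg (hg (n + 1) n.succ_pos) ht)
    (fun _ => sq_nonneg _) hx (hE.tsum_ofReal_modeBudget_le hX hg ht)

end EnergyIneqAt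

lemma fluxRate_le {Φ v s : ℝ} (hφ : |φ n| ≤ Φ) (hg : 0 < g n) (hg' : 0 < g (n + 1))
    (hkg : kk β n * g n ≤ kk β (n + 1) * g (n + 1)) (hv : |X n s| ≤ v) :
    fluxRate β φ X n s ≤ g (n + 1) * Φ * v / 2 *
      (dissipationRate β g X n s + dissipationRate β g X (n + 1) s) := by
  have hk := kk_pos β n
  have hΦ : 0 ≤ Φ := (abs_nonneg _).trans hφ
  have hv₀ : 0 ≤ v := (abs_nonneg _).trans hv
  have hyoung := two_mul_mul_le_of_mul_le_mul hk.le hg hg' hkg |X n s| |X (n + 1) s|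
  rw [sq_abs, sq_abs] at hyoung
  calc fluxRate β φ X n s ≤ |fluxRate β φ X n s| := le_abs_self _
    _ = |φ n| * |X n s| * (2 * kk β n * (|X n s| * |X (n + 1) s|)) := by
      simp only [fluxRate, abs_mul, abs_pow, abs_of_pos hk, abs_two]
      ring
    _ ≤ Φ * v * (g (n + 1) *
        (kk β n / g n * X n s ^ 2 + kk β (n + 1) / g (n + 1) * X (n + 1) s ^ 2)) := by
      gcongr
    _ = g (n + 1) * Φ * v / 2 *
        (dissipationRate β g X n s + dissipationRate β g X (n + 1) s) := by
      unfold dissipationRate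
      ring

lemma energyFlux_le {Φ v : ℝ} (hX : ContinuousOn (X n) (Icc 0 t))
    (hX' : ContinuousOn (X (n + 1)) (Icc 0 t)) (hφ : |φ n| ≤ Φ) (hg : 0 < g n)
    (hg' : 0 < g (n + 1)) (hkg : kk β n * g n ≤ kk β (n + 1) * g (n + 1)) (ht : 0 ≤ t)
    (hv : ∀ s ∈ Icc 0 t, |X n s| ≤ v) :
    energyFlux β φ X n t ≤ g (n + 1) * Φ * v / 2 *
      (dissipation β g X n t + dissipation β g X (n + 1) t) := by
  have hint := intervalIntegrable_dissipationRate (β := β) (g := g) hX ht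
  have hint' := intervalIntegrable_dissipationRate (β := β) (g := g) hX' ht
  unfold energyFlux dissipation
  rw [← intervalIntegral.integral_add hint hint', ← intervalIntegral.integral_const_mul]
  exact intervalIntegral.integral_mono_on ht (intervalIntegrable_fluxRate hX hX' ht)
    ((hint.add hint').const_mul _) fun s hs => fluxRate_le hφ hg hg' hkg (hv s hs)

namespace IsDyadicSolution

lemma continuousOn (hsol : IsDyadicSolution β φ g x X) (n : ℕ) (t : ℝ) :
    ContinuousOn (X n) (Icc 0 t) := by
  obtain ⟨hzero, -, hode⟩ := hsol
  rcases Nat.eq_zero_or_pos n with rfl | hn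
  · simpa only [funext hzero] using continuousOn_const
  · exact fun s hs => (hode n hn s hs.1).continuousWithinAt.mono Icc_subset_Ici_self

lemma hasDerivWithinAt_sq (hsol : IsDyadicSolution β φ g x X) (n : ℕ) (ht : 0 ≤ t) :
    HasDerivWithinAt (fun s => X (n + 1) s ^ 2)
      (fluxRate β φ X n t - fluxRate β φ X (n + 1) t - dissipationRate β g X (n + 1) t)
      (Ici 0) t := by
  refine ((hsol.2.2 (n + 1) n.succ_pos t ht).pow 2).congr_deriv ?_
  simp only [fluxRate, dissipationRate, Nat.add_sub_cancel]
  push_cast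
  ring

lemma modeBudget_add_energyFlux (hsol : IsDyadicSolution β φ g x X) (n : ℕ) (ht : 0 ≤ t) :
    modeBudget β g X (n + 1) t + energyFlux β φ X (n + 1) t =
      x (n + 1) ^ 2 + energyFlux β φ X n t := by
  have hX (m : ℕ) := hsol.continuousOn m t
  have hin : IntervalIntegrable (fluxRate β φ X n) volume 0 t :=
    intervalIntegrable_fluxRate (hX n) (hX (n + 1)) ht
  have hout : IntervalIntegrable (fluxRate β φ X (n + 1)) volume 0 t :=
    intervalIntegrable_fluxRate (hX (n + 1)) (hX (n + 2)) ht
  have hdiss : IntervalIntegrable (dissipationRate β g X (n + 1)) volume 0 t :=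
    intervalIntegrable_dissipationRate (hX (n + 1)) ht
  have hftc := intervalIntegral.integral_eq_sub_of_hasDeriv_right_of_le ht ((hX (n + 1)).pow 2)
    (fun s hs => (hsol.hasDerivWithinAt_sq n hs.1.le).mono (Ioi_subset_Ici hs.1.le))
    ((hin.sub hout).sub hdiss)
  rw [intervalIntegral.integral_sub (hin.sub hout) hdiss, intervalIntegral.integral_sub hin hout,
    Pi.pow_apply, Pi.pow_apply, hsol.2.1 (n + 1) n.succ_pos] at hftc
  unfold modeBudget dissipation energyFlux
  linarith

lemma energyFlux_zero (hsol : IsDyadicSolution β φ g x X) (t : ℝ) : energyFlux β φ X 0 t = 0 := by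
  simp [energyFlux, fluxRate, hsol.1]

lemma tailBudget_succ_le (hsol : IsDyadicSolution β φ g x X) (hE : EnergyIneqAt β g x X t)
    (hg : ∀ n, 1 ≤ n → 0 ≤ g n) (hx : Summable fun n => x (n + 1) ^ 2) (ht : 0 ≤ t) (n : ℕ) :
    tailBudget β g X (n + 1) t ≤ tail2 x (n + 1) + energyFlux β φ X n t := by
  have hX (m : ℕ) := hsol.continuousOn m t
  induction n with
  | zero => simpa [hsol.energyFlux_zero] using hE.tailBudget_one_le hX hg hx ht
  | succ n ih =>
    have hbudget := tailBudget_eq_modeBudget_add (hE.summable_modeBudget hX hg hx ht) (n + 1)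
    have hinitial := tail2_eq_sq_add_tail2 hx (n + 1)
    have hmode := hsol.modeBudget_add_energyFlux n ht
    linarith

lemma sq_add_tailBudget_le_Cfun_mul_add {Φ v y : ℝ} (hsol : IsDyadicSolution β φ g x X)
    (hE : EnergyIneqAt β g x X t) (hφ : |φ (n + 2)| ≤ Φ) (hg : ∀ n, 1 ≤ n → 0 < g n)
    (hkg : kk β (n + 2) * g (n + 2) ≤ kk β (n + 3) * g (n + 3))
    (hx : Summable fun n => x (n + 1) ^ 2) (ht : 0 ≤ t)
    (hv : ∀ s ∈ Icc 0 t, |X (n + 2) s| ≤ v)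
    (hy : X (n + 1) t ^ 2 + tailBudget β g X (n + 2) t ≤ y) :
    X (n + 3) t ^ 2 + tailBudget β g X (n + 4) t ≤ Cfun Φ g (n + 3) v * y + tail2 x (n + 3) := by
  have hX (m : ℕ) := hsol.continuousOn m t
  have hsum : Summable fun n => modeBudget β g X n t :=
    hE.summable_modeBudget hX (fun n hn => (hg n hn).le) hx ht
  have hg₂ := hg (n + 2) (by lia)
  have hg₃ := hg (n + 3) (by lia)
  set b := g (n + 3) * Φ * v / 2
  have hb : 0 ≤ b := by
    have hΦ : 0 ≤ Φ := (abs_nonneg _).trans hφ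
    have hv₀ : 0 ≤ v := (abs_nonneg _).trans (hv 0 ⟨le_rfl, ht⟩)
    positivity
  have hdiss : dissipation β g X (n + 2) t + dissipation β g X (n + 3) t ≤
      y - (X (n + 3) t ^ 2 + tailBudget β g X (n + 4) t) := by
    have htail₂ := tailBudget_eq_modeBudget_add hsum (n + 2)
    have htail₃ := tailBudget_eq_modeBudget_add hsum (n + 3)
    unfold modeBudget at htail₂ htail₃
    linarith [sq_nonneg (X (n + 1) t), sq_nonneg (X (n + 2) t)]
  refine le_div_one_add_mul_add hb (tail2_nonneg x _) ?_
  calc X (n + 3) t ^ 2 + tailBudget β g X (n + 4) t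
      ≤ tailBudget β g X (n + 3) t := sq_add_tailBudget_le hsum hg₃.le ht
    _ ≤ tail2 x (n + 3) + energyFlux β φ X (n + 2) t :=
      hsol.tailBudget_succ_le hE (fun n hn => (hg n hn).le) hx ht (n + 2)
    _ ≤ tail2 x (n + 3) + b * (dissipation β g X (n + 2) t + dissipation β g X (n + 3) t) := by
      gcongr
      exact energyFlux_le (hX (n + 2)) (hX (n + 3)) hφ hg₂ hg₃ hkg ht hv
    _ ≤ tail2 x (n + 3) + b * (y - (X (n + 3) t ^ 2 + tailBudget β g X (n + 4) t)) := by
      gcongr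

theorem sq_add_tailBudget_le_boundSeq {Φ T : ℝ} (hsol : IsDyadicSolution β φ g x X)
    (hEI : ∀ t, 0 ≤ t → t < T → EnergyIneqAt β g x X t) (hφ : ∀ n, 1 ≤ n → |φ n| ≤ Φ)
    (hg : ∀ n, 1 ≤ n → 0 < g n)
    (hkg : ∀ n, 1 ≤ n → kk β n * g n ≤ kk β (n + 1) * g (n + 1))
    (hx : Summable fun n => x (n + 1) ^ 2) (n : ℕ) :
    ∀ t, 0 ≤ t → t < T →
      X (n + 1) t ^ 2 + tailBudget β g X (n + 2) t ≤ boundSeq Φ g x (n + 1) := by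
  have hg₀ (n : ℕ) (hn : 1 ≤ n) : 0 ≤ g n := (hg n hn).le
  have hsum (t : ℝ) (ht : 0 ≤ t) (htT : t < T) : Summable fun n => modeBudget β g X n t :=
    (hEI t ht htT).summable_modeBudget (hsol.continuousOn · t) hg₀ hx ht
  have htotal (t : ℝ) (ht : 0 ≤ t) (htT : t < T) : tailBudget β g X 1 t ≤ 2 * tail2 x 1 :=
    ((hEI t ht htT).tailBudget_one_le (hsol.continuousOn · t) hg₀ hx ht).trans
      (le_mul_of_one_le_left (tail2_nonneg x 1) one_le_two)
  induction n using Nat.twoStepInduction with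
  | zero =>
    intro t ht htT
    exact (sq_add_tailBudget_le (hsum t ht htT) (hg₀ 1 le_rfl) ht).trans (htotal t ht htT)
  | one =>
    intro t ht htT
    calc X 2 t ^ 2 + tailBudget β g X 3 t
        ≤ tailBudget β g X 2 t := sq_add_tailBudget_le (hsum t ht htT) (hg₀ 2 one_le_two) ht
      _ ≤ X 1 t ^ 2 + tailBudget β g X 2 t := le_add_of_nonneg_left (sq_nonneg _)
      _ ≤ tailBudget β g X 1 t := sq_add_tailBudget_le (hsum t ht htT) (hg₀ 1 le_rfl) ht
      _ ≤ 2 * tail2 x 1 := htotal t ht htT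
  | more n ih ih' =>
    intro t ht htT
    have hv (s : ℝ) (hs : s ∈ Icc 0 t) : |X (n + 2) s| ≤ √(boundSeq Φ g x (n + 2)) :=
      Real.abs_le_sqrt <| (le_add_of_nonneg_right <|
        tailBudget_nonneg (fun i hi => hg₀ i (by lia)) hs.1).trans <|
          ih' s hs.1 (hs.2.trans_lt htT)
    exact hsol.sq_add_tailBudget_le_Cfun_mul_add (hEI t ht htT) (hφ _ (by lia)) hg
      (hkg _ (by lia)) hx ht hv (ih t ht htT)

end IsDyadicSolution

end

theorem dyadic_solution_le_boundSeq_general (β : ℝ) (φ g : ℕ → ℝ) (Φ : ℝ)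
    (hφ : ∀ n, 1 ≤ n → |φ n| ≤ Φ) (hg : ∀ n, 1 ≤ n → 0 < g n)
    (hkg : ∀ n, 1 ≤ n → kk β n * g n ≤ kk β (n + 1) * g (n + 1)) (T : ℝ)
    (x : ℕ → ℝ) (hx : Summable fun n => x (n + 1) ^ 2)
    (X : ℕ → ℝ → ℝ) (hsol : IsDyadicSolution β φ g x X)
    (hEI : ∀ t, 0 ≤ t → t < T → EnergyIneqAt β g x X t) (n : ℕ) (hn : 1 ≤ n) (t : ℝ)
    (ht : 0 ≤ t) (htT : t < T) : X n t ^ 2 ≤ boundSeq Φ g x n := by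
  obtain ⟨m, rfl⟩ := Nat.exists_eq_add_of_le' hn
  have htail : 0 ≤ tailBudget β g X (m + 2) t :=
    tailBudget_nonneg (fun i hi => (hg i (by lia)).le) ht
  exact (le_add_of_nonneg_right htail).trans
    (hsol.sq_add_tailBudget_le_boundSeq hEI hφ hg hkg hx m t ht htT)

/-- Lemma 3.3: `Xₙ(t)² ≤ yₙ` where `y` is the bounding sequence for the initial datum. -/
theorem dyadic_solution_le_boundSeq
    (β : ℝ) (hβ : 0 < β) (φ g : ℕ → ℝ)
    (hφbdd : BddAbove (Set.range fun n : ℕ => |φ (n + 1)|))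
    (hgpos : ∀ n : ℕ, 1 ≤ n → 0 < g n)
    (hgmono : ∀ n m : ℕ, 1 ≤ n → n ≤ m → g n ≤ g m)
    (T : ℝ) (hT : 0 < T)
    (x : ℕ → ℝ) (hxH : Summable fun n : ℕ => (x (n + 1)) ^ 2)
    (X : ℕ → ℝ → ℝ) (hsol : IsDyadicSolution β φ g x X)
    (hEI : ∀ t : ℝ, 0 ≤ t → t < T → EnergyIneqAt β g x X t) :
    ∀ n : ℕ, 1 ≤ n → ∀ t : ℝ, 0 ≤ t → t < T →
      (X n t) ^ 2 ≤ boundSeq (phiNorm φ) g x n :=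
  dyadic_solution_le_boundSeq_general β φ g (phiNorm φ)
    (fun _ => abs_le_phiNorm hφbdd) hgpos
    (fun n hn => mul_le_mul (kk_monotone hβ.le n.le_succ) (hgmono n (n + 1) hn n.le_succ)
      (hgpos n hn).le (kk_pos β _).le) T x hxH X hsol hEI
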